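/- Let m ≥ 1, n ≥ 2 and let Ψ be an endomorphism of G = ℤ^m × F_n. Then Ψ is surjective if and only if there exist a surjective endomorphism φ of F_n, an m×m integer matrix Q with det(Q) = 1 or det(Q) = -1, and an n×m integer matrix P such that Ψ(a,u) = (aQ + ūP, φ(u)) for all (a,u) ∈ G. -/

import Mathlib

open Matrix

/-- The abelianization vector (vector of exponent sums of the generators)
of an element of the free group `F_n`. -/
def abVec {n : ℕ} (u : FreeGroup (Fin n)) : Fin n → ℤ :=
  Multiplicative.toAdd ((FreeGroup.lift fun i => Multiplicative.ofAdd (Pi.single i (1 : ℤ))) u)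

/-- The free-abelian times free group `G = ℤ^m × F_n`. -/
abbrev GFab (m n : ℕ) := Multiplicative (Fin m → ℤ) × FreeGroup (Fin n)

/-!
A surjective homomorphism maps the center into the center, and `F_n` is centerless for `n ≥ 2`, so
a surjective `Ψ` sends `ℤ^m` into `ℤ^m`; this forces the triangular form `(aQ + ūP, φ(u))`.
For such a map, `Q` need only be onto up to the elements `ūP` with `φ(u) = 1`. These vanish when
`φ` is surjective: `φ` induces a surjective, hence injective, endomorphism of `ℤ^n`, so `φ(u) = 1`
implies `ū = 0`.
-/

section Center

theorem map_mem_center_of_surjective {G H : Type*} [Group G] [Group H] {f : G →* H}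
    (hf : Function.Surjective f) {z : G} (hz : z ∈ Subgroup.center G) :
    f z ∈ Subgroup.center H := by
  refine Subgroup.mem_center_iff.2 fun h => ?_
  obtain ⟨g, rfl⟩ := hf h
  rw [← map_mul, ← map_mul, Subgroup.mem_center_iff.1 hz g]

theorem freeGroup_center_eq_bot {α : Type*} [Nontrivial α] :
    Subgroup.center (FreeGroup α) = ⊥ := by
  classical
  refine (Subgroup.eq_bot_iff_forall _).2 fun z hz => ?_
  by_contra hne
  have hw : z.toWord ≠ [] := mt FreeGroup.toWord_eq_nil_iff.1 hne
  have hred : FreeGroup.IsReduced z.toWord := FreeGroup.isReduced_toWord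
  -- `x` is a letter that cancels on neither side of the word of `z`.
  obtain ⟨j, hj⟩ := exists_ne (z.toWord.head hw).1
  let x : α × Bool := (j, (z.toWord.getLast hw).2)
  have hleft : FreeGroup.IsReduced ([x] ++ z.toWord) := by
    refine List.isChain_append.2 ⟨List.isChain_singleton x, hred, fun y hy l hl hyl => ?_⟩
    obtain rfl : x = y := Option.some.inj hy
    obtain rfl : z.toWord.head hw = l :=
      Option.some.inj ((List.head?_eq_some_head hw).symm.trans hl)
    exact absurd hyl hj
  have hright : FreeGroup.IsReduced (z.toWord ++ [x]) := by
    refine List.isChain_append.2 ⟨hred, List.isChain_singleton x, fun l hl y hy _ => ?_⟩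
    obtain rfl : x = y := Option.some.inj hy
    obtain rfl : z.toWord.getLast hw = l :=
      Option.some.inj ((List.getLast?_eq_some_getLast hw).symm.trans hl)
    rfl
  have hwords : [x] ++ z.toWord = z.toWord ++ [x] := by
    have hcomm := congrArg FreeGroup.toWord (Subgroup.mem_center_iff.1 hz (FreeGroup.mk [x]))
    rwa [FreeGroup.toWord_mul, FreeGroup.toWord_mul, FreeGroup.toWord_mk,
      FreeGroup.IsReduced.singleton.reduce_eq, hleft.reduce_eq, hright.reduce_eq] at hcomm
  have hhead : x = z.toWord.head hw := by
    have hheads := congrArg List.head? hwords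
    rw [List.head?_append_of_ne_nil _ hw, List.head?_eq_some_head hw] at hheads
    exact Option.some.inj hheads
  exact hj (congrArg Prod.fst hhead)

end Center

section Triangular

variable {A B G H : Type*} [Group B] [Group G] [Group H]

theorem snd_map_inl_eq_one [CommGroup A] {Ψ : A × G →* B × H} (hΨ : Function.Surjective Ψ)
    (hH : Subgroup.center H = ⊥) (a : A) : (Ψ (a, 1)).2 = 1 := by
  have ha : (a, (1 : G)) ∈ Subgroup.center (A × G) := by
    rw [Subgroup.center_prod, CommGroup.center_eq_top]
    exact ⟨Subgroup.mem_top a, one_mem _⟩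
  have hsnd : Function.Surjective ((MonoidHom.snd B H).comp Ψ) := Prod.snd_surjective.comp hΨ
  exact Subgroup.mem_bot.1 (hH ▸ map_mem_center_of_surjective hsnd ha)

theorem triangular_surjective_iff {α : A → B} {β : G →* B} {φ : G →* H}
    (hker : Function.Surjective φ → φ.ker ≤ β.ker) :
    Function.Surjective (fun x : A × G => (α x.1 * β x.2, φ x.2)) ↔
      Function.Surjective φ ∧ Function.Surjective α := by
  constructor
  · intro h
    have hφ : Function.Surjective φ :=
      Function.Surjective.of_comp (g := Prod.snd) (Prod.snd_surjective.comp h)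
    refine ⟨hφ, fun b => ?_⟩
    obtain ⟨⟨a, u⟩, hau⟩ := h (b, 1)
    obtain ⟨hb, hu⟩ := Prod.mk.inj hau
    have hβ : β u = 1 := hker hφ hu
    exact ⟨a, by rwa [hβ, mul_one] at hb⟩
  · rintro ⟨hφ, hα⟩ ⟨b, v⟩
    obtain ⟨u, rfl⟩ := hφ v
    obtain ⟨a, ha⟩ := hα (b * (β u)⁻¹)
    exact ⟨(a, u), by simp only [ha, inv_mul_cancel_right]⟩

end Triangular

section Abelianization

variable {n : ℕ}

/-- The abelianization `F_n → ℤ^n`, the homomorphism whose values are the vectors `abVec u`;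
its target is written multiplicatively. -/
def abHom (n : ℕ) : FreeGroup (Fin n) →* Multiplicative (Fin n → ℤ) :=
  FreeGroup.lift fun i => Multiplicative.ofAdd (Pi.single i 1)

theorem toAdd_abHom (u : FreeGroup (Fin n)) : (abHom n u).toAdd = abVec u := rfl

theorem abVec_of (i : Fin n) : abVec (FreeGroup.of i) = Pi.single i 1 := by
  rw [← toAdd_abHom, abHom, FreeGroup.lift_apply_of, toAdd_ofAdd]

theorem abVec_surjective : Function.Surjective (abVec (n := n)) := by
  intro b
  refine ⟨(List.ofFn fun i => FreeGroup.of i ^ b i).prod, ?_⟩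
  rw [← toAdd_abHom, map_list_prod, List.map_ofFn, List.prod_ofFn, toAdd_prod]
  simp only [Function.comp_apply, map_zpow, toAdd_zpow, toAdd_abHom, abVec_of]
  exact (pi_eq_sum_univ' b).symm

theorem exists_linearMap_comp_abVec {M : Type*} [AddCommGroup M]
    (f : FreeGroup (Fin n) →* Multiplicative M) :
    ∃ L : (Fin n → ℤ) →ₗ[ℤ] M, ∀ u, (f u).toAdd = L (abVec u) := by
  let L : (Fin n → ℤ) →ₗ[ℤ] M :=
    Fintype.linearCombination ℤ fun i => (f (FreeGroup.of i)).toAdd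
  have hL : f = L.toAddMonoidHom.toMultiplicative.comp (abHom n) := by
    ext i
    simp [L, abVec_of, toAdd_abHom]
  exact ⟨L, fun u => congrArg Multiplicative.toAdd (DFunLike.congr_fun hL u)⟩

theorem abVec_eq_zero_of_map_eq_one {φ : FreeGroup (Fin n) →* FreeGroup (Fin n)}
    (hφ : Function.Surjective φ) {u : FreeGroup (Fin n)} (hu : φ u = 1) : abVec u = 0 := by
  obtain ⟨L, hL⟩ := exists_linearMap_comp_abVec ((abHom n).comp φ)
  have hL' : abVec ∘ φ = L ∘ abVec := funext hL
  have hL_surj : Function.Surjective L := .of_comp (hL' ▸ abVec_surjective.comp hφ)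
  have hL_inj : Function.Injective L :=
    OrzechProperty.injective_of_surjective_endomorphism L hL_surj
  refine hL_inj ?_
  rw [← hL, MonoidHom.comp_apply, hu, map_one, toAdd_one, map_zero]

end Abelianization

theorem vecMul_surjective_iff_det_eq_one_or_neg_one {ι : Type*} [Fintype ι]
    [DecidableEq ι] {Q : Matrix ι ι ℤ} :
    Function.Surjective (· ᵥ* Q) ↔ Q.det = 1 ∨ Q.det = -1 := by
  rw [← Int.isUnit_iff, ← Matrix.isUnit_iff_isUnit_det]
  exact vecMul_surjective_iff_isUnit

section TypeI

variable {m n k : ℕ} {H : Type*} [Group H]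

/-- The map `(a, u) ↦ (aQ + ūP, φ(u))` on `ℤ^m × F_n`, called of type I. The free factor of its
target may be any group `H`, and the ranks of the two free-abelian factors may differ. -/
def typeIMap (φ : FreeGroup (Fin n) →* H) (Q : Matrix (Fin m) (Fin k) ℤ)
    (P : Matrix (Fin n) (Fin k) ℤ) : GFab m n → Multiplicative (Fin k → ℤ) × H :=
  fun x => (Multiplicative.ofAdd (x.1.toAdd ᵥ* Q + abVec x.2 ᵥ* P), φ x.2)

theorem exists_eq_typeIMap_of_surjective {Ψ : GFab m n →* Multiplicative (Fin k → ℤ) × H}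
    (hΨ : Function.Surjective Ψ) (hH : Subgroup.center H = ⊥) :
    ∃ φ Q P, ⇑Ψ = typeIMap φ Q P := by
  let α := (MonoidHom.fst _ _).comp (Ψ.comp (MonoidHom.inl _ _))
  let β := (MonoidHom.fst _ _).comp (Ψ.comp (MonoidHom.inr _ _))
  let φ := (MonoidHom.snd _ _).comp (Ψ.comp (MonoidHom.inr _ _))
  obtain ⟨Q, hQ⟩ := Matrix.toLinearMapRight'.surjective
    (AddMonoidHom.toMultiplicative.symm α).toIntLinearMap
  obtain ⟨L, hL⟩ := exists_linearMap_comp_abVec β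
  obtain ⟨P, rfl⟩ := Matrix.toLinearMapRight'.surjective L
  refine ⟨φ, Q, P, funext fun ⟨a, u⟩ => ?_⟩
  have hα : (α a).toAdd = a.toAdd ᵥ* Q := (LinearMap.congr_fun hQ a.toAdd).symm
  have hβ : (β u).toAdd = abVec u ᵥ* P := hL u
  calc Ψ (a, u) = Ψ (a, 1) * Ψ (1, u) := by rw [← map_mul, Prod.fst_mul_snd (a, u)]
    _ = (α a * β u, (Ψ (a, 1)).2 * φ u) := rfl
    _ = (α a * β u, φ u) := by rw [snd_map_inl_eq_one hΨ hH, one_mul]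
    _ = typeIMap φ Q P (a, u) := by rw [typeIMap, ← hα, ← hβ]; rfl

theorem typeIMap_surjective_iff {φ : FreeGroup (Fin n) →* FreeGroup (Fin n)}
    {Q : Matrix (Fin m) (Fin m) ℤ} {P : Matrix (Fin n) (Fin m) ℤ} :
    Function.Surjective (typeIMap φ Q P) ↔
      Function.Surjective φ ∧ (Q.det = 1 ∨ Q.det = -1) := by
  let α (a : Multiplicative (Fin m → ℤ)) := Multiplicative.ofAdd (a.toAdd ᵥ* Q)
  let β := (AddMonoidHom.toMultiplicative P.vecMulLinear.toAddMonoidHom).comp (abHom n)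
  have hker (hφ : Function.Surjective φ) : φ.ker ≤ β.ker := fun u hu => by
    have hu' : abHom n u = 1 := congrArg Multiplicative.ofAdd (abVec_eq_zero_of_map_eq_one hφ hu)
    rw [MonoidHom.mem_ker, MonoidHom.comp_apply, hu', map_one]
  rw [← vecMul_surjective_iff_det_eq_one_or_neg_one]
  exact triangular_surjective_iff (α := α) hker

end TypeI

/-- An endomorphism Ψ of `ℤ^m × F_n` (m ≥ 1, n ≥ 2) is surjective iff it is of type I
with φ a surjective endomorphism of `F_n` and `det Q = ±1`. -/
theorem epi_characterization (m n : ℕ) (hm : 1 ≤ m) (hn : 2 ≤ n)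
    (Ψ : GFab m n →* GFab m n) :
    Function.Surjective Ψ ↔
    ∃ (φ : FreeGroup (Fin n) →* FreeGroup (Fin n))
      (Q : Matrix (Fin m) (Fin m) ℤ) (P : Matrix (Fin n) (Fin m) ℤ),
      Function.Surjective φ ∧ (Q.det = 1 ∨ Q.det = -1) ∧
      ∀ (a : Fin m → ℤ) (u : FreeGroup (Fin n)),
        Ψ (Multiplicative.ofAdd a, u)
          = (Multiplicative.ofAdd (a ᵥ* Q + abVec u ᵥ* P), φ u) := by
  constructor
  · intro hΨ
    have : Nontrivial (Fin n) := Fin.nontrivial_iff_two_le.2 hn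
    obtain ⟨φ, Q, P, hform⟩ := exists_eq_typeIMap_of_surjective hΨ freeGroup_center_eq_bot
    obtain ⟨hφ, hQ⟩ := typeIMap_surjective_iff.1 (hform ▸ hΨ)
    exact ⟨φ, Q, P, hφ, hQ, fun a u => congrFun hform (Multiplicative.ofAdd a, u)⟩
  · rintro ⟨φ, Q, P, hφ, hQ, hform⟩
    have hΨ : ⇑Ψ = typeIMap φ Q P := funext fun x => hform x.1.toAdd x.2
    exact hΨ ▸ typeIMap_surjective_iff.2 ⟨hφ, hQ⟩
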